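/- arXiv:math/9502222 — 6 statements merged into one kernel-verified Lean document; each statement's English description precedes it below -/
import Mathlib

section
/- Let D = (V,E) be a finite directed graph with distinguished vertices b and r (b ≠ r) such that from every vertex there is a directed path to at least one of b and r. Then D admits a Richman cost function, i.e., there exists a function R : V → [0,1] with R(b) = 0, R(r) = 1, and R(v) = (R⁺(v) + R⁻(v))/2 for every vertex v ∉ {b,r}. -/
open Relation Filter

variable {V : Type*}

/-- `fplus E f v` is `f⁺(v) = sup_{w ∈ S(v)} f(w)`, where `S(v)` is the set of successors of `v`. -/
noncomputable def fplus (E : V → V → Prop) (f : V → ℝ) (v : V) : ℝ :=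
  sSup (f '' {w | E v w})

/-- `fminus E f v` is `f⁻(v) = inf_{u ∈ S(v)} f(u)`. -/
noncomputable def fminus (E : V → V → Prop) (f : V → ℝ) (v : V) : ℝ :=
  sInf (f '' {w | E v w})

/-- A Richman cost function: `R : V → [0,1]`, `R(b) = 0`, `R(r) = 1`, and
`R(v) = (R⁺(v) + R⁻(v))/2` for every `v ∉ {b, r}`. -/
def IsRichman (E : V → V → Prop) (b r : V) (R : V → ℝ) : Prop :=
  (∀ v, R v ∈ Set.Icc (0 : ℝ) 1) ∧ R b = 0 ∧ R r = 1 ∧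
    ∀ v, v ≠ b → v ≠ r → R v = (fplus E R v + fminus E R v) / 2

lemma fplus_mono_aux [Fintype V] (E : V → V → Prop) {f g : V → ℝ} (h : ∀ v, f v ≤ g v) (v : V) :
    fplus E f v ≤ fplus E g v := by
  unfold fplus
  rcases Set.eq_empty_or_nonempty {w | E v w} with h0 | h0
  · simp [h0]
  · refine csSup_le (h0.image f) ?_
    rintro _ ⟨w, hw, rfl⟩
    exact (h w).trans (le_csSup (Set.toFinite _).bddAbove ⟨w, hw, rfl⟩)

lemma fminus_mono_aux [Fintype V] (E : V → V → Prop) {f g : V → ℝ} (h : ∀ v, f v ≤ g v) (v : V) :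
    fminus E f v ≤ fminus E g v := by
  unfold fminus
  rcases Set.eq_empty_or_nonempty {w | E v w} with h0 | h0
  · simp [h0]
  · refine le_csInf (h0.image g) ?_
    rintro _ ⟨w, hw, rfl⟩
    exact (csInf_le (Set.toFinite _).bddBelow (Set.mem_image_of_mem f hw)).trans (h w)

lemma fplus_mem_aux (E : V → V → Prop) {f : V → ℝ} (h : ∀ v, f v ∈ Set.Icc (0 : ℝ) 1) (v : V) :
    fplus E f v ∈ Set.Icc (0 : ℝ) 1 := by
  constructor
  · apply Real.sSup_nonneg
    rintro _ ⟨w, hw, rfl⟩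
    exact (h w).1
  · apply Real.sSup_le _ zero_le_one
    rintro _ ⟨w, hw, rfl⟩
    exact (h w).2

lemma fminus_mem_aux (E : V → V → Prop) {f : V → ℝ} (h : ∀ v, f v ∈ Set.Icc (0 : ℝ) 1) (v : V) :
    fminus E f v ∈ Set.Icc (0 : ℝ) 1 := by
  unfold fminus
  rcases Set.eq_empty_or_nonempty {w | E v w} with h0 | ⟨w, hw⟩
  · simp [h0]
  constructor
  · apply Real.sInf_nonneg
    rintro _ ⟨w, hw, rfl⟩
    exact (h w).1
  · refine (csInf_le ⟨0, ?_⟩ (Set.mem_image_of_mem f hw)).trans (h w).2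
    rintro _ ⟨w, hw, rfl⟩
    exact (h w).1

/-- A finite digraph with distinguished vertices `b ≠ r`, such that from every vertex there is
a directed path to `b` or to `r`, admits a Richman cost function. -/
theorem richman_exists [Fintype V] [DecidableEq V] (E : V → V → Prop) (b r : V)
    (hbr : b ≠ r)
    (hreach : ∀ v, ReflTransGen E v b ∨ ReflTransGen E v r) :
    ∃ R : V → ℝ, IsRichman E b r R := by
  have : Fact ((0 : ℝ) ≤ 1) := ⟨zero_le_one⟩
  let T : (V → Set.Icc (0 : ℝ) 1) →o (V → Set.Icc (0 : ℝ) 1) :=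
    { toFun := fun f v => if v = b then ⟨0, by simp⟩ else if v = r then ⟨1, by simp⟩ else
        ⟨(fplus E (fun w => (f w : ℝ)) v + fminus E (fun w => (f w : ℝ)) v) / 2, by
          have h1 := fplus_mem_aux E (fun w => (f w).2) v
          have h2 := fminus_mem_aux E (fun w => (f w).2) v
          constructor <;> linarith [h1.1, h1.2, h2.1, h2.2]⟩
      monotone' := by
        intro f g hfg v
        have hfg' : ∀ w, (f w : ℝ) ≤ g w := fun w => hfg w
        have h1 := fplus_mono_aux E hfg' v
        have h2 := fminus_mono_aux E hfg' v
        dsimp only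
        split_ifs
        · exact le_refl _
        · exact le_refl _
        · apply Subtype.mk_le_mk.2
          linarith }
  have hT := T.map_lfp
  have hv : ∀ v, T T.lfp v = T.lfp v := fun v => congrFun hT v
  refine ⟨fun v => (T.lfp v : ℝ), fun v => (T.lfp v).2, ?_, ?_, ?_⟩
  · dsimp only
    rw [← hv b]
    change ((if b = b then _ else if b = r then _ else _ : Set.Icc (0 : ℝ) 1) : ℝ) = _
    rw [if_pos rfl]
  · dsimp only
    rw [← hv r]
    change ((if r = b then _ else if r = r then _ else _ : Set.Icc (0 : ℝ) 1) : ℝ) = _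
    rw [if_neg hbr.symm, if_pos rfl]
  · intro v h1 h2
    have := congrArg Subtype.val (hv v)
    dsimp only
    rw [← this]
    change ((if v = b then _ else if v = r then _ else _ : Set.Icc (0 : ℝ) 1) : ℝ) = _
    rw [if_neg h1, if_neg h2]
end

section
/- Define R(v,t) by: R(b,t) = 0 and R(r,t) = 1 for all t; R(v,0) = 1 for v ∉ {b,r}; and R(v,t) = (R⁺(v,t−1) + R⁻(v,t−1))/2 for v ∉ {b,r} and t > 0. Then for every vertex v the limit R(v) = lim_{t→∞} R(v,t) exists, and the function v ↦ R(v) is a Richman cost function on D. -/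
open Relation Filter

variable {V : Type*}

/-- The auxiliary function `R(v,t)`: `R(b,t) = 0`, `R(r,t) = 1`, `R(v,0) = 1` for `v ∉ {b,r}`,
and `R(v,t) = (R⁺(v,t-1) + R⁻(v,t-1))/2` for `v ∉ {b,r}`, `t > 0`. -/
noncomputable def Rseq [DecidableEq V] (E : V → V → Prop) (b r : V) : ℕ → V → ℝ
  | 0 => fun v => if v = b then 0 else 1
  | t + 1 => fun v =>
      if v = b then 0
      else if v = r then 1
      else (fplus E (Rseq E b r t) v + fminus E (Rseq E b r t) v) / 2

theorem fplus_eq_aux [Fintype V] (E : V → V → Prop) (f : V → ℝ) (v : V)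
    (s : Finset V) (hs : (s : Set V) = {w | E v w}) (H : s.Nonempty) :
    fplus E f v = s.sup' H f := by
  rw [Finset.sup'_eq_csSup_image, hs]; rfl

theorem fminus_eq_aux [Fintype V] (E : V → V → Prop) (f : V → ℝ) (v : V)
    (s : Finset V) (hs : (s : Set V) = {w | E v w}) (H : s.Nonempty) :
    fminus E f v = s.inf' H f := by
  rw [Finset.inf'_eq_csInf_image, hs]; rfl

/-- The averaging operator is monotone, continuous and preserves `[0,1]`. -/
theorem avg_aux [Fintype V] (E : V → V → Prop) (v : V) :
    (∀ f g : V → ℝ, (∀ w, f w ≤ g w) →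
      (fplus E f v + fminus E f v) / 2 ≤ (fplus E g v + fminus E g v) / 2) ∧
    (∀ f : V → ℝ, (∀ w, f w ∈ Set.Icc (0 : ℝ) 1) →
      (fplus E f v + fminus E f v) / 2 ∈ Set.Icc (0 : ℝ) 1) ∧
    (∀ (F : ℕ → V → ℝ) (R : V → ℝ), (∀ w, Tendsto (fun t => F t w) atTop (nhds (R w))) →
      Tendsto (fun t => (fplus E (F t) v + fminus E (F t) v) / 2) atTop
        (nhds ((fplus E R v + fminus E R v) / 2))) := by
  classical
  have hs : ((Finset.univ.filter (fun w => E v w) : Finset V) : Set V) = {w | E v w} := by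
    ext; simp
  rcases (Finset.univ.filter (fun w => E v w)).eq_empty_or_nonempty with H | H
  · have he : {w | E v w} = (∅ : Set V) := by rw [← hs, H]; simp
    simp [fplus, fminus, he]
  · simp only [fun f => fplus_eq_aux E f v _ hs H, fun f => fminus_eq_aux E f v _ hs H]
    refine ⟨fun f g h => ?_, fun f h => ?_, fun F R h => ?_⟩
    · have h1 := Finset.sup'_mono_fun (hs := H) (f := f) (g := g) fun w _ => h w
      have h2 := Finset.inf'_mono_fun (hs := H) (f := g) (g := f) fun w _ => h w
      linarith
    · obtain ⟨w, _, hw⟩ := Finset.exists_mem_eq_sup' H f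
      obtain ⟨u, _, hu⟩ := Finset.exists_mem_eq_inf' H f
      rw [hw, hu]
      have := h w
      have := h u
      simp only [Set.mem_Icc] at *
      constructor <;> linarith
    · refine (Tendsto.add ?_ ?_).div_const 2
      · exact Tendsto.finset_sup'_nhds_apply H fun w _ => h w
      · exact Tendsto.finset_inf'_nhds_apply H fun w _ => h w

/-- For every vertex `v` the limit `R(v) = lim_{t→∞} R(v,t)` exists, and `v ↦ R(v)` is a
Richman cost function on `D`. -/
theorem Rseq_tendsto_richman [Fintype V] [DecidableEq V] (E : V → V → Prop) (b r : V)
    (hbr : b ≠ r)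
    (hreach : ∀ v, ReflTransGen E v b ∨ ReflTransGen E v r) :
    ∃ R : V → ℝ,
      (∀ v, Tendsto (fun t => Rseq E b r t v) atTop (nhds (R v))) ∧
      IsRichman E b r R := by
  have hI : ∀ t v, Rseq E b r t v ∈ Set.Icc (0 : ℝ) 1 := by
    intro t
    induction t with
    | zero => intro v; by_cases h : v = b <;> simp [Rseq, h]
    | succ t ih =>
      intro v
      by_cases h : v = b
      · simp [Rseq, h]
      by_cases h' : v = r
      · simp [Rseq, h', hbr.symm]
      simpa only [Rseq, h, h', if_false] using (avg_aux E v).2.1 _ ih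
  have hb : ∀ t, Rseq E b r t b = 0 := by intro t; cases t <;> simp [Rseq]
  have hr : ∀ t, Rseq E b r t r = 1 := by intro t; cases t <;> simp [Rseq, hbr.symm]
  have hstep : ∀ t v, Rseq E b r (t + 1) v ≤ Rseq E b r t v := by
    intro t
    induction t with
    | zero =>
      intro v
      by_cases h : v = b
      · subst h; rw [hb, hb]
      · have := (hI (0 + 1) v).2
        simpa only [Rseq, h, if_false] using this
    | succ t ih =>
      intro v
      by_cases h : v = b
      · subst h; rw [hb, hb]
      by_cases h' : v = r
      · subst h'; rw [hr, hr]
      have := (avg_aux E v).1 _ _ ih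
      have e : ∀ t, Rseq E b r (t + 1) v =
          (fplus E (Rseq E b r t) v + fminus E (Rseq E b r t) v) / 2 := by
        intro t; simp only [Rseq, h, h', if_false]
      rw [e, e]
      exact this
  have hlim : ∀ v, ∃ x, Tendsto (fun t => Rseq E b r t v) atTop (nhds x) := fun v =>
    ⟨_, tendsto_atTop_ciInf (antitone_nat_of_succ_le fun t => hstep t v)
      ⟨0, by rintro _ ⟨t, rfl⟩; exact (hI t v).1⟩⟩
  choose R hR using hlim
  refine ⟨R, hR, fun v => isClosed_Icc.mem_of_tendsto (hR v) (Eventually.of_forall fun t => hI t v),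
    ?_, ?_, fun v h h' => ?_⟩
  · exact tendsto_nhds_unique (hR b) (by simp [hb])
  · exact tendsto_nhds_unique (hR r) (by simp [hr])
  · refine tendsto_nhds_unique ((tendsto_add_atTop_iff_nat 1).2 (hR v)) ?_
    have := (avg_aux E v).2.2 _ _ hR
    simpa only [Rseq, h, h', if_false] using this
end

section
/- Let R be any Richman cost function on D. Call an edge (v,u) ∈ E an edge of steepest descent if R(u) = R⁻(v), and let the steepest-descent closure of a vertex z be the set of all vertices reachable from z by a (possibly empty) path all of whose edges are edges of steepest descent. Then for every vertex z with R(z) < 1, the vertex b belongs to the steepest-descent closure of z. -/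
open Relation Filter

variable {V : Type*}

/-- Steepest-descent lemma: if `R` is a Richman cost function and `R(z) < 1`, then `b` lies in
the closure of `z` under edges of steepest descent (edges `(v,u)` with `R(u) = R⁻(v)`). -/
theorem steepest_descent_reaches_b [Fintype V] [DecidableEq V] (E : V → V → Prop) (b r : V)
    (hbr : b ≠ r)
    (hreach : ∀ v, ReflTransGen E v b ∨ ReflTransGen E v r)
    (R : V → ℝ) (hR : IsRichman E b r R)
    (z : V) (hz : R z < 1) :
    ReflTransGen (fun v u => E v u ∧ R u = fminus E R v) z b := by
  classical
  obtain ⟨h01, hb0, hr1, hmid⟩ := hR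
  by_contra hnb
  obtain ⟨v, hvC, hvmin⟩ := Set.exists_min_image
    {x | ReflTransGen (fun v u => E v u ∧ R u = fminus E R v) z x} R
    (Set.toFinite _) ⟨z, ReflTransGen.refl⟩
  have hv1 : R v < 1 := lt_of_le_of_lt (hvmin z ReflTransGen.refl) hz
  have key : ∀ x, ReflTransGen E v x →
      ReflTransGen (fun v u => E v u ∧ R u = fminus E R v) z x ∧ R x = R v := by
    intro x hx
    induction hx with
    | refl => exact ⟨hvC, rfl⟩
    | @tail x y _ hxy ih =>
      obtain ⟨hxC, hxm⟩ := ih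
      have hxb : x ≠ b := by
        rintro rfl
        exact hnb hxC
      have hxr : x ≠ r := by
        rintro rfl
        linarith
      have hfin : (R '' {w | E x w}).Finite := Set.toFinite _
      have hne : (R '' {w | E x w}).Nonempty := ⟨R y, y, hxy, rfl⟩
      obtain ⟨u, hu, hum⟩ := hne.csInf_mem hfin
      have hum' : R u = fminus E R x := hum
      have huC := hvmin u (hxC.tail ⟨hu, hum'⟩)
      have h1 : R y ≤ fplus E R x := le_csSup hfin.bddAbove ⟨y, hxy, rfl⟩
      have h2 : fminus E R x ≤ R y := csInf_le hfin.bddBelow ⟨y, hxy, rfl⟩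
      have h3 : R u ≤ fplus E R x := le_csSup hfin.bddAbove ⟨u, hu, rfl⟩
      have h4 := hmid x hxb hxr
      have h5 : R y = fminus E R x := by linarith
      exact ⟨hxC.tail ⟨hxy, h5⟩, by linarith⟩
  rcases hreach v with h | h
  · exact hnb (key b h).1
  · have := (key r h).2
    linarith
end

section
/- The Richman cost function of D is unique: if R₁ and R₂ are both Richman cost functions on D, then R₁(v) = R₂(v) for every vertex v. -/
open Relation Filter

variable {V : Type*}

theorem fplus_spec [Fintype V] (E : V → V → Prop) (f : V → ℝ) (v : V) (h : ∃ w, E v w) :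
    (∃ w, E v w ∧ f w = fplus E f v) ∧ ∀ x, E v x → f x ≤ fplus E f v := by
  have hne : (f '' {w | E v w}).Nonempty := Set.Nonempty.image f h
  have hfin : (f '' {w | E v w}).Finite := Set.toFinite _
  refine ⟨?_, fun x hx => le_csSup hfin.bddAbove ⟨x, hx, rfl⟩⟩
  obtain ⟨w, hw, e⟩ := hne.csSup_mem hfin
  exact ⟨w, hw, e⟩

theorem fminus_spec [Fintype V] (E : V → V → Prop) (f : V → ℝ) (v : V) (h : ∃ w, E v w) :
    (∃ w, E v w ∧ f w = fminus E f v) ∧ ∀ x, E v x → fminus E f v ≤ f x := by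
  have hne : (f '' {w | E v w}).Nonempty := Set.Nonempty.image f h
  have hfin : (f '' {w | E v w}).Finite := Set.toFinite _
  refine ⟨?_, fun x hx => csInf_le hfin.bddBelow ⟨x, hx, rfl⟩⟩
  obtain ⟨w, hw, e⟩ := hne.csInf_mem hfin
  exact ⟨w, hw, e⟩

theorem richman_le [Fintype V] (E : V → V → Prop) (b r : V)
    (hreach : ∀ v, ReflTransGen E v b ∨ ReflTransGen E v r)
    (R₁ R₂ : V → ℝ) (h₁ : IsRichman E b r R₁) (h₂ : IsRichman E b r R₂) :
    ∀ v, R₁ v ≤ R₂ v := by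
  classical
  by_contra! hcon
  obtain ⟨v₀, hv₀⟩ := hcon
  obtain ⟨-, b₁, r₁, e₁⟩ := h₁
  obtain ⟨-, b₂, r₂, e₂⟩ := h₂
  obtain ⟨a, -, ha⟩ := Finset.exists_max_image Finset.univ (fun v => R₁ v - R₂ v) ⟨v₀, Finset.mem_univ _⟩
  set M := R₁ a - R₂ a with hM
  have hmax : ∀ v, R₁ v - R₂ v ≤ M := fun v => ha v (Finset.mem_univ _)
  have hpos : 0 < M := by linarith [hmax v₀]
  obtain ⟨c, hc, hcm⟩ := Finset.exists_max_image (Finset.univ.filter (fun v => R₁ v - R₂ v = M)) R₁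
    ⟨a, by simp [hM]⟩
  simp only [Finset.mem_filter, Finset.mem_univ, true_and] at hc hcm
  have hb : ∀ v, R₁ v - R₂ v = M → v ≠ b := by
    rintro v hv rfl
    linarith
  have hr : ∀ v, R₁ v - R₂ v = M → v ≠ r := by
    rintro v hv rfl
    linarith
  have step : ∀ v x, (R₁ v - R₂ v = M ∧ R₁ v = R₁ c) → E v x →
      (R₁ x - R₂ x = M ∧ R₁ x = R₁ c) := by
    rintro v x ⟨hv, hvc⟩ hx
    have E1 := e₁ v (hb v hv) (hr v hv)
    have E2 := e₂ v (hb v hv) (hr v hv)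
    obtain ⟨⟨p, hp, hpe⟩, P1⟩ := fplus_spec E R₁ v ⟨x, hx⟩
    obtain ⟨-, P2⟩ := fplus_spec E R₂ v ⟨x, hx⟩
    obtain ⟨-, Q1⟩ := fminus_spec E R₁ v ⟨x, hx⟩
    obtain ⟨⟨q, hq, hqe⟩, Q2⟩ := fminus_spec E R₂ v ⟨x, hx⟩
    have i1 := P2 p hp
    have i2 := Q1 q hq
    have i3 := hmax p
    have i4 := hmax q
    have i5 := hcm p (by linarith)
    have j1 := P1 x hx
    have j2 := P2 x hx
    have j3 := Q1 x hx
    have j4 := Q2 x hx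
    constructor <;> linarith
  have walk : ∀ x, ReflTransGen E c x → (R₁ x - R₂ x = M ∧ R₁ x = R₁ c) := by
    intro x h
    induction h with
    | refl => exact ⟨hc, rfl⟩
    | tail _ h ih => exact step _ _ ih h
  rcases hreach c with h | h
  · exact hb b (walk b h).1 rfl
  · exact hr r (walk r h).1 rfl

/-- Uniqueness of the Richman cost function. -/
theorem richman_unique [Fintype V] [DecidableEq V] (E : V → V → Prop) (b r : V)
    (hbr : b ≠ r)
    (hreach : ∀ v, ReflTransGen E v b ∨ ReflTransGen E v r)
    (R₁ R₂ : V → ℝ) (h₁ : IsRichman E b r R₁) (h₂ : IsRichman E b r R₂) :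
    ∀ v, R₁ v = R₂ v := by
  intro v
  exact le_antisymm (richman_le E b r hreach R₁ R₂ h₁ h₂ v) (richman_le E b r hreach R₂ R₁ h₂ h₁ v)
end

section
/- Define R′(v,t) by: R′(b,t) = 0 and R′(r,t) = 1 for all t; R′(v,0) = 0 for v ∉ {b,r}; and R′(v,t) = (R′⁺(v,t−1) + R′⁻(v,t−1))/2 for v ∉ {b,r} and t > 0. Also define R(v,t) identically except that R(v,0) = 1 for v ∉ {b,r}. Then for every vertex v the limit R′(v) = lim_{t→∞} R′(v,t) exists, the function v ↦ R′(v) is a Richman cost function on D, and R′(v) = lim_{t→∞} R(v,t) for every v. -/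
open Relation Filter

variable {V : Type*}

/-- The auxiliary function `R'(v,t)`: `R'(b,t) = 0`, `R'(r,t) = 1`, `R'(v,0) = 0` for `v ∉ {b,r}`,
and `R'(v,t) = (R'⁺(v,t-1) + R'⁻(v,t-1))/2` for `v ∉ {b,r}`, `t > 0`. -/
noncomputable def Rseq' [DecidableEq V] (E : V → V → Prop) (b r : V) : ℕ → V → ℝ
  | 0 => fun v => if v = r then 1 else 0
  | t + 1 => fun v =>
      if v = b then 0
      else if v = r then 1
      else (fplus E (Rseq' E b r t) v + fminus E (Rseq' E b r t) v) / 2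


/-- One step of the Richman recursion. -/
noncomputable def richStep [DecidableEq V] (E : V → V → Prop) (b r : V) (f : V → ℝ) : V → ℝ :=
  fun v => if v = b then 0 else if v = r then 1 else (fplus E f v + fminus E f v) / 2

theorem le_fplus [Finite V] (E : V → V → Prop) (f : V → ℝ) {v w : V} (h : E v w) :
    f w ≤ fplus E f v :=
  le_csSup (Set.toFinite _).bddAbove ⟨w, h, rfl⟩

theorem fminus_le [Finite V] (E : V → V → Prop) (f : V → ℝ) {v w : V} (h : E v w) :
    fminus E f v ≤ f w :=
  csInf_le (Set.toFinite _).bddBelow ⟨w, h, rfl⟩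

theorem exists_fplus [Finite V] (E : V → V → Prop) (f : V → ℝ) {v : V} (h : ∃ w, E v w) :
    ∃ w, E v w ∧ f w = fplus E f v := by
  obtain ⟨w, hw⟩ := h
  exact Set.Nonempty.csSup_mem (s := f '' {w | E v w}) ⟨_, w, hw, rfl⟩ (Set.toFinite _)

theorem exists_fminus [Finite V] (E : V → V → Prop) (f : V → ℝ) {v : V} (h : ∃ w, E v w) :
    ∃ w, E v w ∧ f w = fminus E f v := by
  obtain ⟨w, hw⟩ := h
  exact Set.Nonempty.csInf_mem (s := f '' {w | E v w}) ⟨_, w, hw, rfl⟩ (Set.toFinite _)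

theorem fplus_mono [Finite V] (E : V → V → Prop) {f g : V → ℝ} (hfg : ∀ v, f v ≤ g v) {v : V}
    (h : ∃ w, E v w) : fplus E f v ≤ fplus E g v := by
  obtain ⟨w, hw, e⟩ := exists_fplus E f h
  linarith [le_fplus E g hw, hfg w]

theorem fminus_mono [Finite V] (E : V → V → Prop) {f g : V → ℝ} (hfg : ∀ v, f v ≤ g v) {v : V}
    (h : ∃ w, E v w) : fminus E f v ≤ fminus E g v := by
  obtain ⟨w, hw, e⟩ := exists_fminus E g h
  linarith [fminus_le E f hw, hfg w]

theorem fplus_tendsto [Finite V] (E : V → V → Prop) {F : ℕ → V → ℝ} {g : V → ℝ}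
    (hF : ∀ v, Tendsto (fun t => F t v) atTop (nhds (g v))) {v : V} (h : ∃ w, E v w) :
    Tendsto (fun t => fplus E (F t) v) atTop (nhds (fplus E g v)) := by
  rw [Metric.tendsto_atTop]
  intro ε hε
  have h1 : ∀ᶠ t in atTop, ∀ w, |F t w - g w| < ε := by
    rw [eventually_all]
    intro w
    exact Metric.tendsto_nhds.1 (hF w) ε hε
  obtain ⟨N, hN⟩ := eventually_atTop.1 h1
  refine ⟨N, fun n hn => ?_⟩
  rw [Real.dist_eq, abs_lt]
  obtain ⟨w, hw, e⟩ := exists_fplus E (F n) h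
  obtain ⟨u, hu, e'⟩ := exists_fplus E g h
  have a := abs_lt.1 (hN n hn w)
  have a' := abs_lt.1 (hN n hn u)
  constructor <;> linarith [le_fplus E (F n) hu, le_fplus E g hw]

theorem fminus_tendsto [Finite V] (E : V → V → Prop) {F : ℕ → V → ℝ} {g : V → ℝ}
    (hF : ∀ v, Tendsto (fun t => F t v) atTop (nhds (g v))) {v : V} (h : ∃ w, E v w) :
    Tendsto (fun t => fminus E (F t) v) atTop (nhds (fminus E g v)) := by
  rw [Metric.tendsto_atTop]
  intro ε hε
  have h1 : ∀ᶠ t in atTop, ∀ w, |F t w - g w| < ε := by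
    rw [eventually_all]
    intro w
    exact Metric.tendsto_nhds.1 (hF w) ε hε
  obtain ⟨N, hN⟩ := eventually_atTop.1 h1
  refine ⟨N, fun n hn => ?_⟩
  rw [Real.dist_eq, abs_lt]
  obtain ⟨w, hw, e⟩ := exists_fminus E (F n) h
  obtain ⟨u, hu, e'⟩ := exists_fminus E g h
  have a := abs_lt.1 (hN n hn w)
  have a' := abs_lt.1 (hN n hn u)
  constructor <;> linarith [fminus_le E (F n) hu, fminus_le E g hw]

theorem richStep_mono [Finite V] [DecidableEq V] (E : V → V → Prop) (b r : V)
    (hs : ∀ v, v ≠ b → v ≠ r → ∃ w, E v w) {f g : V → ℝ} (hfg : ∀ v, f v ≤ g v) (v : V) :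
    richStep E b r f v ≤ richStep E b r g v := by
  unfold richStep
  split_ifs with h1 h2
  · exact le_rfl
  · exact le_rfl
  · linarith [fplus_mono E hfg (hs v h1 h2), fminus_mono E hfg (hs v h1 h2)]

theorem richStep_mem [Finite V] [DecidableEq V] (E : V → V → Prop) (b r : V)
    (hs : ∀ v, v ≠ b → v ≠ r → ∃ w, E v w) {f : V → ℝ}
    (hf : ∀ v, f v ∈ Set.Icc (0 : ℝ) 1) (v : V) :
    richStep E b r f v ∈ Set.Icc (0 : ℝ) 1 := by
  unfold richStep
  split_ifs with h1 h2
  · simp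
  · simp
  · obtain ⟨w, -, e⟩ := exists_fplus E f (hs v h1 h2)
    obtain ⟨u, -, e'⟩ := exists_fminus E f (hs v h1 h2)
    have := hf w
    have := hf u
    simp only [Set.mem_Icc] at *
    constructor <;> linarith

theorem isRichman_of_tendsto [Finite V] [DecidableEq V] (E : V → V → Prop) (b r : V) (hbr : b ≠ r)
    (hs : ∀ v, v ≠ b → v ≠ r → ∃ w, E v w) {F : ℕ → V → ℝ} {g : V → ℝ}
    (hmem : ∀ t v, F t v ∈ Set.Icc (0 : ℝ) 1)
    (hstep : ∀ t, F (t + 1) = richStep E b r (F t))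
    (hF : ∀ v, Tendsto (fun t => F t v) atTop (nhds (g v))) : IsRichman E b r g := by
  have hF' : ∀ v, Tendsto (fun t => richStep E b r (F t) v) atTop (nhds (g v)) := by
    intro v
    have := (tendsto_add_atTop_iff_nat 1).2 (hF v)
    simpa only [hstep] using this
  refine ⟨fun v => isClosed_Icc.mem_of_tendsto (hF v) (Eventually.of_forall fun t => hmem t v),
    ?_, ?_, ?_⟩
  · have := hF' b
    simp only [richStep, if_true] at this
    exact tendsto_nhds_unique this tendsto_const_nhds
  · have := hF' r
    simp only [richStep, if_true, if_neg hbr.symm] at this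
    exact tendsto_nhds_unique this tendsto_const_nhds
  · intro v h1 h2
    have := hF' v
    simp only [richStep, if_neg h1, if_neg h2] at this
    exact tendsto_nhds_unique this
      (((fplus_tendsto E hF (hs v h1 h2)).add (fminus_tendsto E hF (hs v h1 h2))).div_const 2)

theorem richman_le_s7 [Finite V] (E : V → V → Prop) (b r : V)
    (hs : ∀ v, v ≠ b → v ≠ r → ∃ w, E v w)
    (hreach : ∀ v, ReflTransGen E v b ∨ ReflTransGen E v r) {f g : V → ℝ}
    (hf : IsRichman E b r f) (hg : IsRichman E b r g) (v : V) : f v ≤ g v := by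
  by_contra! hv
  haveI : Nonempty V := ⟨v⟩
  obtain ⟨m, hm⟩ := Finite.exists_max (fun v => f v - g v)
  obtain ⟨M, hM⟩ : ∃ M, M = f m - g m := ⟨_, rfl⟩
  have hle : ∀ w, f w - g w ≤ M := fun w => hM ▸ hm w
  have hpos : 0 < M := by linarith [hle v]
  obtain ⟨a, ha, hmax⟩ := Set.exists_max_image {w | f w - g w = M} f (Set.toFinite _)
    ⟨m, hM.symm⟩
  simp only [Set.mem_setOf_eq] at ha hmax
  obtain ⟨-, fb, fr, hf⟩ := hf
  obtain ⟨-, gb, gr, hg⟩ := hg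
  have key : ∀ x y, (f x - g x = M ∧ f x = f a) → E x y → (f y - g y = M ∧ f y = f a) := by
    rintro x y ⟨hx, hxa⟩ hxy
    have xb : x ≠ b := by rintro rfl; linarith
    have xr : x ≠ r := by rintro rfl; linarith
    have e1 := hf x xb xr
    have e2 := hg x xb xr
    obtain ⟨w, hw, hwe⟩ := exists_fplus E f ⟨y, hxy⟩
    obtain ⟨u, hu, hue⟩ := exists_fminus E g ⟨y, hxy⟩
    have i1 := le_fplus E g hw
    have i2 := fminus_le E f hu
    have i3 := hle w
    have i4 := hle u
    have i5 := hmax w (by linarith)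
    have i6 := le_fplus E f hxy
    have i7 := fminus_le E f hxy
    have i8 := le_fplus E g hxy
    have i9 := hle y
    constructor <;> linarith
  have reach : ∀ y, ReflTransGen E a y → (f y - g y = M ∧ f y = f a) := by
    intro y h
    induction h with
    | refl => exact ⟨ha, rfl⟩
    | tail _ h ih => exact key _ _ ih h
  rcases hreach a with h | h
  · linarith [(reach _ h).1]
  · linarith [(reach _ h).1]

/-- The limit `R'(v) = lim_{t→∞} R'(v,t)` exists, `v ↦ R'(v)` is a Richman cost function,
and it coincides with `lim_{t→∞} R(v,t)` for every `v`. -/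
theorem Rseq'_tendsto_richman_eq [Fintype V] [DecidableEq V] (E : V → V → Prop) (b r : V)
    (hbr : b ≠ r)
    (hreach : ∀ v, ReflTransGen E v b ∨ ReflTransGen E v r) :
    ∃ R' : V → ℝ,
      (∀ v, Tendsto (fun t => Rseq' E b r t v) atTop (nhds (R' v))) ∧
      IsRichman E b r R' ∧
      (∀ v, Tendsto (fun t => Rseq E b r t v) atTop (nhds (R' v))) := by
  have hs : ∀ v, v ≠ b → v ≠ r → ∃ w, E v w := by
    intro v h1 h2
    rcases hreach v with h | h
    · rcases h.cases_head with h | ⟨w, h, -⟩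
      · exact absurd h h1
      · exact ⟨w, h⟩
    · rcases h.cases_head with h | ⟨w, h, -⟩
      · exact absurd h h2
      · exact ⟨w, h⟩
  have st : ∀ t, Rseq E b r (t + 1) = richStep E b r (Rseq E b r t) := fun t => rfl
  have st' : ∀ t, Rseq' E b r (t + 1) = richStep E b r (Rseq' E b r t) := fun t => rfl
  have mem : ∀ t v, Rseq E b r t v ∈ Set.Icc (0 : ℝ) 1 := by
    intro t
    induction t with
    | zero => intro v; simp only [Rseq]; split_ifs <;> simp
    | succ t ih => rw [st]; exact richStep_mem E b r hs ih
  have mem' : ∀ t v, Rseq' E b r t v ∈ Set.Icc (0 : ℝ) 1 := by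
    intro t
    induction t with
    | zero => intro v; simp only [Rseq']; split_ifs <;> simp
    | succ t ih => rw [st']; exact richStep_mem E b r hs ih
  have anti : ∀ t v, Rseq E b r (t + 1) v ≤ Rseq E b r t v := by
    intro t
    induction t with
    | zero =>
      intro v
      by_cases h : v = b
      · simp [Rseq, h]
      · have := (mem 1 v).2
        simpa [Rseq, h] using this
    | succ t ih => intro v; rw [st (t + 1), st t]; exact richStep_mono E b r hs ih v
  have mono : ∀ t v, Rseq' E b r t v ≤ Rseq' E b r (t + 1) v := by
    intro t
    induction t with
    | zero =>
      intro v
      by_cases h : v = r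
      · simp [Rseq', h, hbr.symm]
      · have := (mem' 1 v).1
        simpa [Rseq', h] using this
    | succ t ih => intro v; rw [st' (t + 1), st' t]; exact richStep_mono E b r hs ih v
  have lim : ∀ v, Tendsto (fun t => Rseq E b r t v) atTop (nhds (⨅ t, Rseq E b r t v)) :=
    fun v => tendsto_atTop_ciInf (antitone_nat_of_succ_le fun t => anti t v)
      ⟨0, by rintro _ ⟨t, rfl⟩; exact (mem t v).1⟩
  have lim' : ∀ v, Tendsto (fun t => Rseq' E b r t v) atTop (nhds (⨆ t, Rseq' E b r t v)) :=
    fun v => tendsto_atTop_ciSup (monotone_nat_of_le_succ fun t => mono t v)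
      ⟨1, by rintro _ ⟨t, rfl⟩; exact (mem' t v).2⟩
  have rich := isRichman_of_tendsto E b r hbr hs mem st lim
  have rich' := isRichman_of_tendsto E b r hbr hs mem' st' lim'
  refine ⟨_, lim', rich', fun v => ?_⟩
  have e := le_antisymm (richman_le_s7 E b r hs hreach rich rich' v)
    (richman_le_s7 E b r hs hreach rich' rich v)
  rw [← e]
  exact lim v
end

section
/- Let R be the (unique) Richman cost function on D. Then R(v) is a rational number for every vertex v. -/
open Relation Filter

variable {V : Type*}

theorem richman_aux [Fintype V] (E : V → V → Prop) (b r : V)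
    (hreach : ∀ v, ReflTransGen E v b ∨ ReflTransGen E v r)
    (R : V → ℝ) (hR : IsRichman E b r R) (φ : ℝ →ₗ[ℚ] ℚ) (h1 : φ 1 = 0) (v : V) :
    φ (R v) ≤ 0 := by
  classical
  obtain ⟨-, hb, hr, hav⟩ := hR
  by_contra! hpos
  obtain ⟨m, -, hm⟩ := Finset.exists_max_image Finset.univ (fun v => φ (R v)) ⟨v, by simp⟩
  obtain ⟨a, ha, hamax⟩ := Finset.exists_max_image
    (Finset.univ.filter fun v => φ (R v) = φ (R m)) R ⟨m, by simp⟩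
  simp only [Finset.mem_filter, Finset.mem_univ, true_and, forall_const] at ha hamax hm
  have hM : 0 < φ (R a) := by rw [ha]; exact lt_of_lt_of_le hpos (hm v)
  have hne : ∀ w, R w = R a → w ≠ b ∧ w ≠ r := by
    intro w hw
    constructor
    · rintro rfl
      rw [← hw, hb, map_zero] at hM
      exact lt_irrefl _ hM
    · rintro rfl
      rw [← hw, hr, h1] at hM
      exact lt_irrefl _ hM
  have hstep : ∀ w u, R w = R a → E w u → R u = R a := by
    intro w u hw hu
    have hfin : (R '' {x | E w x}).Finite := Set.toFinite _
    have hnon : (R '' {x | E w x}).Nonempty := ⟨R u, u, hu, rfl⟩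
    obtain ⟨p, hp, hpe⟩ := hnon.csSup_mem hfin
    obtain ⟨q, hq, hqe⟩ := hnon.csInf_mem hfin
    have hle : R u ≤ R p := hpe ▸ le_csSup hfin.bddAbove ⟨u, hu, rfl⟩
    have hge : R q ≤ R u := hqe ▸ csInf_le hfin.bddBelow ⟨u, hu, rfl⟩
    have hmean := hav w (hne w hw).1 (hne w hw).2
    unfold fplus fminus at hmean
    rw [← hpe, ← hqe, hw] at hmean
    have hsum : R a + R a = R p + R q := by linarith
    have hφ := congrArg φ hsum
    rw [map_add, map_add] at hφ
    have h3 := hm p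
    have h4 := hm q
    have h5 := hamax p (by linarith)
    have h6 := hamax q (by linarith)
    linarith
  have hall : ∀ w, ReflTransGen E a w → R w = R a := by
    intro w hw
    induction hw with
    | refl => rfl
    | tail _ h ih => exact hstep _ _ ih h
  rcases hreach a with h | h
  · exact (hne b (hall b h)).1 rfl
  · exact (hne r (hall r h)).2 rfl

/-- Richman costs are rational numbers. -/
theorem richman_rational [Fintype V] [DecidableEq V] (E : V → V → Prop) (b r : V)
    (hbr : b ≠ r)
    (hreach : ∀ v, ReflTransGen E v b ∨ ReflTransGen E v r)
    (R : V → ℝ) (hR : IsRichman E b r R) :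
    ∀ v, ∃ q : ℚ, R v = (q : ℝ) := by
  intro v
  by_contra hcon
  have hnot : R v ∉ Submodule.span ℚ ({1} : Set ℝ) := by
    intro h
    obtain ⟨q, hq⟩ := Submodule.mem_span_singleton.1 h
    exact hcon ⟨q, by rw [← hq, Rat.smul_def, mul_one]⟩
  obtain ⟨φ, hφ, hle⟩ := Submodule.exists_le_ker_of_notMem hnot
  have h1 : φ 1 = 0 := hle (Submodule.mem_span_singleton_self 1)
  have ha := richman_aux E b r hreach R hR φ h1 v
  have hb := richman_aux E b r hreach R hR (-φ) (by simp [h1]) v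
  rw [LinearMap.neg_apply] at hb
  exact hφ (by linarith)
end
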